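/- arXiv:1802.01793 — 2 statements merged into one kernel-verified Lean document; each statement's English description precedes it below -/
import Mathlib

section
/- Let p ≥ 3 be an odd integer, let i ≥ 0, and set k = (p − 1)/2 + i·p. Then for every integer j, the integer (j − 2)·s_k(j)² divides s_k(T_p(j)) − p·s_i(T_p(j)). -/
/-- The sequence `s_k(n)`: `s_0 = 1`, `s_1 = n + 1`, `s_{k+2} = n·s_{k+1} − s_k`. -/
def s (n : ℤ) : ℕ → ℤ
  | 0 => 1
  | 1 => n + 1
  | k + 2 => n * s n (k + 1) - s n k

/-- The sequence `r_k(n)`: `r_0 = 1`, `r_1 = n − 1`, `r_{k+2} = n·r_{k+1} − r_k`. -/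
def r (n : ℤ) : ℕ → ℤ
  | 0 => 1
  | 1 => n - 1
  | k + 2 => n * r n (k + 1) - r n k

/-- Dilated Chebyshev polynomials of the first kind: `T_0 = 2`, `T_1 = n`. -/
def T (n : ℤ) : ℕ → ℤ
  | 0 => 2
  | 1 => n
  | k + 2 => n * T n (k + 1) - T n k

/-- Dilated Chebyshev polynomials of the second kind: `U_0 = 1`, `U_1 = n`. -/
def U (n : ℤ) : ℕ → ℤ
  | 0 => 1
  | 1 => n
  | k + 2 => n * U n (k + 1) - U n k

/-!
Put `x = y² + y⁻²`. The rescaled Chebyshev polynomials of Mathlib satisfy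
`C_m(x) = y^(2m) + y^(-2m)` and `S_{m-1}(x) = (y^(2m) - y^(-2m)) / (y² - y⁻²)`, so `s_k` is the
value of `W_k = S_k + S_{k-1}`, with `W_k(x) = (y^(2k+1) - y^(-(2k+1))) / (y - y⁻¹)`.
Let `p = 2q + 1`, `N = 2k + 1 = p(2i + 1)` and `n = C_p(x)`. Replacing `y` by `y^p` gives
`W_k(n) = W_i(n) · W_q(C_N(x))`, and `W_q(t) ≡ W_q(2) = p` modulo `t - 2`. Hence
`W_k(n) - p · W_i(n)` is divisible by `C_N(x) - 2 = (y^N - y^(-N))² = (x - 2) · W_k(x)²`.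
-/

open Polynomial

section ChebyshevW

variable (R : Type*) [CommRing R]

/-- The Chebyshev polynomial of the fourth kind, dilated like `Polynomial.Chebyshev.S`:
`W_k(2 cos θ) = sin((k + 1/2)θ) / sin(θ/2)`. Its values at integers are the sequence `s`. -/
noncomputable def chebyshevW (k : ℤ) : R[X] :=
  Chebyshev.S R k + Chebyshev.S R (k - 1)

theorem chebyshevW_zero : chebyshevW R 0 = 1 := by
  simp [chebyshevW]

theorem chebyshevW_one : chebyshevW R 1 = X + 1 := by
  simp [chebyshevW]

theorem chebyshevW_neg_sub_one (k : ℤ) : chebyshevW R (-k - 1) = -chebyshevW R k := by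
  rw [chebyshevW, chebyshevW, Chebyshev.S_neg_sub_one, show -k - 1 - 1 = -k - 2 by ring,
    Chebyshev.S_neg_sub_two]
  ring

theorem chebyshevW_eval_two (k : ℤ) : (chebyshevW R k).eval 2 = 2 * k + 1 := by
  rw [chebyshevW, eval_add, Chebyshev.S_eval_two, Chebyshev.S_eval_two]
  push_cast
  ring

theorem chebyshevC_mul_S (m k : ℤ) :
    Chebyshev.C R m * Chebyshev.S R k = Chebyshev.S R (k + m) + Chebyshev.S R (k - m) := by
  induction m using Chebyshev.induct' with
  | zero => simp [two_mul]
  | one => rw [Chebyshev.C_one, Chebyshev.S_add_one]; ring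
  | add_two m ih₁ ih₀ =>
    have hadd := Chebyshev.S_add_two R (k + m)
    have hsub := Chebyshev.S_sub_two R (k - m)
    have hC := Chebyshev.C_add_two R m
    linear_combination (norm := ring_nf)
      Chebyshev.S R k * hC - hsub - hadd - ih₀ + (X : R[X]) * ih₁
  | neg m ih => rw [Chebyshev.C_neg, ih, sub_neg_eq_add, ← sub_eq_add_neg, add_comm]

theorem chebyshevC_mul_chebyshevW (m k : ℤ) :
    Chebyshev.C R m * chebyshevW R k = chebyshevW R (k + m) + chebyshevW R (k - m) := by
  simp only [chebyshevW]
  linear_combination (norm := ring_nf) chebyshevC_mul_S R m k + chebyshevC_mul_S R m (k - 1)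

theorem chebyshevW_add_two (k : ℤ) :
    chebyshevW R (k + 2) = X * chebyshevW R (k + 1) - chebyshevW R k := by
  have h := chebyshevC_mul_chebyshevW R 1 (k + 1)
  rw [Chebyshev.C_one, add_assoc, one_add_one_eq_two, add_sub_cancel_right] at h
  exact eq_sub_of_add_eq h.symm

theorem chebyshevC_two_mul_add_one (k : ℤ) :
    Chebyshev.C R (2 * k + 1) = (X - 2) * chebyshevW R k ^ 2 + 2 := by
  have hprod : Chebyshev.C R (k + 1) * Chebyshev.C R k = Chebyshev.C R (2 * k + 1) + X := by
    rw [Chebyshev.C_mul_C, show k + 1 + k = 2 * k + 1 by ring, add_sub_cancel_left,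
      Chebyshev.C_one]
  have hsucc : Chebyshev.C R (k + 1) = X * Chebyshev.S R k - 2 * Chebyshev.S R (k - 1) := by
    rw [Chebyshev.C_eq_S_sub_X_mul_S, Chebyshev.S_add_one, add_sub_cancel_right]
    ring
  have hinv := Chebyshev.S_sq_add_S_sq R (k - 1)
  rw [sub_add_cancel] at hinv
  rw [hsucc, Chebyshev.C_eq_S_sub_X_mul_S] at hprod
  rw [chebyshevW]
  linear_combination (X + 2) * hinv - hprod

theorem chebyshevW_eq_mul_comp (i q : ℤ) :
    chebyshevW R (i + q * (2 * i + 1)) =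
      chebyshevW R i * (chebyshevW R q).comp (Chebyshev.C R (2 * i + 1)) := by
  induction q using Chebyshev.induct with
  | zero => simp [chebyshevW_zero]
  | one =>
    have h := chebyshevC_mul_chebyshevW R (2 * i + 1) i
    rw [show i - (2 * i + 1) = -i - 1 by ring, chebyshevW_neg_sub_one] at h
    rw [chebyshevW_one, add_comp, X_comp, one_comp, one_mul]
    linear_combination -h
  | add_two q ih₁ ih₀ =>
    have h := chebyshevC_mul_chebyshevW R (2 * i + 1) (i + (q + 1) * (2 * i + 1))
    rw [chebyshevW_add_two, sub_comp, mul_comp, X_comp]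
    linear_combination (norm := ring_nf) -h + Chebyshev.C R (2 * i + 1) * ih₁ - ih₀
  | neg_add_one q ih₀ ih₁ =>
    have h := chebyshevC_mul_chebyshevW R (2 * i + 1) (i + (-q) * (2 * i + 1))
    have hW := congr_arg (comp · (Chebyshev.C R (2 * i + 1))) (chebyshevW_add_two R (-q - 1))
    simp only [sub_comp, mul_comp, X_comp] at hW
    linear_combination (norm := ring_nf)
      -h + Chebyshev.C R (2 * i + 1) * ih₀ - ih₁ - chebyshevW R i * hW

end ChebyshevW

theorem s_eq_eval_chebyshevW (n : ℤ) (k : ℕ) : s n k = (chebyshevW ℤ k).eval n := by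
  induction k using Nat.twoStepInduction with
  | zero => simp [s, chebyshevW_zero]
  | one => simp [s, chebyshevW_one]
  | more k ih₀ ih₁ =>
    push_cast at ih₁ ⊢
    rw [s, ih₀, ih₁, chebyshevW_add_two, eval_sub, eval_mul, eval_X]

theorem T_eq_eval_chebyshevC (n : ℤ) (k : ℕ) : T n k = (Chebyshev.C ℤ k).eval n := by
  induction k using Nat.twoStepInduction with
  | zero => simp [T]
  | one => simp [T]
  | more k ih₀ ih₁ =>
    push_cast at ih₁ ⊢
    rw [T, ih₀, ih₁, Chebyshev.C_add_two, eval_sub, eval_mul, eval_X]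

theorem s_congruence_mod_square_general {R : Type*} [CommRing R] {p i k : ℤ}
    (hk : 2 * k + 1 = p * (2 * i + 1)) (x : R) :
    (x - 2) * (chebyshevW R k).eval x ^ 2 ∣
      (chebyshevW R k).eval ((Chebyshev.C R p).eval x) -
        p * (chebyshevW R i).eval ((Chebyshev.C R p).eval x) := by
  obtain ⟨q, rfl⟩ : Odd p := (Int.odd_mul.mp (hk ▸ odd_two_mul_add_one k)).1
  obtain rfl : k = i + q * (2 * i + 1) := by linarith
  set n := (Chebyshev.C R (2 * q + 1)).eval x
  set t := (Chebyshev.C R (2 * i + 1)).eval n with ht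
  have hfactor : (chebyshevW R (i + q * (2 * i + 1))).eval n =
      (chebyshevW R i).eval n * (chebyshevW R q).eval t := by
    rw [chebyshevW_eq_mul_comp, eval_mul, eval_comp]
  have hmodulus : t - 2 = (x - 2) * (chebyshevW R (i + q * (2 * i + 1))).eval x ^ 2 := by
    rw [ht, ← eval_comp, ← Chebyshev.C_mul, mul_comm, ← hk, chebyshevC_two_mul_add_one]
    simp
  have hdvd : t - 2 ∣ (chebyshevW R q).eval t - (2 * q + 1) := by
    simpa only [chebyshevW_eval_two] using sub_dvd_eval_sub t 2 (chebyshevW R q)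
  have hsub : (chebyshevW R (i + q * (2 * i + 1))).eval n -
      (2 * q + 1 : ℤ) * (chebyshevW R i).eval n =
        (chebyshevW R i).eval n * ((chebyshevW R q).eval t - (2 * q + 1)) := by
    rw [hfactor]
    push_cast
    ring
  rw [← hmodulus, hsub]
  exact hdvd.mul_left _

theorem s_congruence_mod_square (p : ℕ) (hp : Odd p) (hp3 : 3 ≤ p) (i : ℕ) (k : ℕ)
    (hk : k = (p - 1) / 2 + i * p) (j : ℤ) :
    (j - 2) * (s j k) ^ 2 ∣ s (T j p) k - (p : ℤ) * s (T j p) i := by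
  have hk' : 2 * (k : ℤ) + 1 = p * (2 * i + 1) := by
    obtain ⟨q, rfl⟩ := hp
    obtain rfl : k = q + i * (2 * q + 1) := by omega
    push_cast
    ring
  simp only [s_eq_eval_chebyshevW, T_eq_eval_chebyshevC]
  exact mod_cast s_congruence_mod_square_general hk' j
end

section
/- Let n ≥ 2 be an integer and let p = 2m + 1 ≥ 3 be an odd integer. Then for all k ≥ 0, s_m(n) divides s_{k+p}(n) − s_k(n); and s_m(n) divides s_k(n) if and only if k ≡ m (mod p). -/
/-! Both divisibilities come from the product formulas `s_m T_i = s_{m+i} + s_{m-i}` and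
`s_m T_{k+m+1} = s_{k+2m+1} - s_k`, the analogues of `2 sin x cos y = sin (x + y) + sin (x - y)`:
for `n = 2 cos 2θ` one has `T_i = 2 cos 2iθ` and `s_k = sin ((2k+1)θ) / sin θ`. The second formula
reduces the question to `k ≤ 2m`, and the first one reflects the range `m < k ≤ 2m` to `k < m`,
where `|s_k| < |s_m|` rules out divisibility. -/

theorem s_add_two (n : ℤ) (k : ℕ) : s n (k + 2) = n * s n (k + 1) - s n k := rfl

theorem T_add_two (n : ℤ) (k : ℕ) : T n (k + 2) = n * T n (k + 1) - T n k := rfl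

theorem T_succ_eq_s_sub_s (n : ℤ) (k : ℕ) : T n (k + 1) = s n (k + 1) - s n k := by
  induction k using Nat.twoStepInduction with
  | zero => simp [T, s]
  | one => simp only [T, s]; ring
  | more k ih₀ ih₁ =>
    linear_combination T_add_two n (k + 1) + n * ih₁ - ih₀ - s_add_two n (k + 1) + s_add_two n k

theorem s_mul_T_eq_add (n : ℤ) (i j : ℕ) :
    s n (j + i) * T n i = s n (j + 2 * i) + s n j := by
  induction i using Nat.twoStepInduction generalizing j with
  | zero => simp only [T, mul_zero, add_zero]; ring
  | one => simp only [T, mul_one, s_add_two]; ring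
  | more i ih₀ ih₁ =>
    have h₀ : s n (j + (i + 2)) * T n i = s n (j + (2 * i + 2)) + s n (j + 2) := by
      grind [ih₀ (j + 2)]
    have h₁ : s n (j + (i + 2)) * T n (i + 1) = s n (j + (2 * i + 3)) + s n (j + 1) := by
      grind [ih₁ (j + 1)]
    calc s n (j + (i + 2)) * T n (i + 2)
        = n * (s n (j + (i + 2)) * T n (i + 1)) - s n (j + (i + 2)) * T n i := by
          rw [T_add_two]; ring
      _ = (n * s n (j + (2 * i + 3)) - s n (j + (2 * i + 2)))
            + (n * s n (j + 1) - s n (j + 2)) := by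
          rw [h₀, h₁]; ring
      _ = s n (j + 2 * (i + 2)) + s n j := by
          rw [show j + 2 * (i + 2) = j + (2 * i + 2) + 2 by ring]
          linear_combination -s_add_two n j - s_add_two n (j + (2 * i + 2))

theorem s_mul_T_eq_sub (n : ℤ) (m k : ℕ) :
    s n m * T n (k + m + 1) = s n (k + (2 * m + 1)) - s n k := by
  induction m using Nat.twoStepInduction generalizing k with
  | zero => simp only [s, T_succ_eq_s_sub_s, mul_zero, add_zero, zero_add, one_mul]
  | one =>
    calc s n 1 * T n (k + 2)
        = (n + 1) * (s n (k + 2) - s n (k + 1)) := by rw [T_succ_eq_s_sub_s]; rfl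
      _ = s n (k + 3) - s n k := by
          linear_combination s_add_two n k - s_add_two n (k + 1)
  | more m ih₀ ih₁ =>
    have h₀ : s n m * T n (k + m + 3) = s n (k + 2 * m + 3) - s n (k + 2) := by
      grind [ih₀ (k + 2)]
    have h₁ : s n (m + 1) * T n (k + m + 3) = s n (k + 2 * m + 4) - s n (k + 1) := by
      grind [ih₁ (k + 1)]
    calc s n (m + 2) * T n (k + m + 3)
        = n * (s n (m + 1) * T n (k + m + 3)) - s n m * T n (k + m + 3) := by
          rw [s_add_two]; ring
      _ = (n * s n (k + 2 * m + 4) - s n (k + 2 * m + 3)) - (n * s n (k + 1) - s n (k + 2)) := by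
          rw [h₀, h₁]; ring
      _ = s n (k + (2 * (m + 2) + 1)) - s n k := by
          rw [show k + (2 * (m + 2) + 1) = k + 2 * m + 3 + 2 by ring]
          linear_combination s_add_two n k - s_add_two n (k + 2 * m + 3)

theorem s_dvd_s_add_sub_s (n : ℤ) (m k : ℕ) : s n m ∣ s n (k + (2 * m + 1)) - s n k :=
  ⟨T n (k + m + 1), (s_mul_T_eq_sub n m k).symm⟩

theorem s_dvd_s_mod_iff (n : ℤ) (m k : ℕ) :
    s n m ∣ s n (k % (2 * m + 1)) ↔ s n m ∣ s n k := by
  have periodic : Function.Periodic (fun k ↦ s n m ∣ s n k) (2 * m + 1) := fun k ↦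
    propext (dvd_iff_dvd_of_dvd_sub (s_dvd_s_add_sub_s n m k))
  exact iff_of_eq (periodic.map_mod_nat k)

theorem strictMono_abs_s {n : ℤ} (hn : 2 ≤ |n|) (hn' : n ≠ -2) :
    StrictMono fun k ↦ |s n k| := by
  refine strictMono_nat_of_lt_succ fun k ↦ ?_
  induction k with
  | zero =>
    have one_lt : 1 < |n + 1| := by grind
    simpa [s] using one_lt
  | succ k ih =>
    calc |s n (k + 1)|
        < 2 * |s n (k + 1)| - |s n k| := by linarith
      _ ≤ |n| * |s n (k + 1)| - |s n k| := by gcongr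
      _ = |n * s n (k + 1)| - |s n k| := by rw [abs_mul]
      _ ≤ |n * s n (k + 1) - s n k| := abs_sub_abs_le_abs_sub _ _

theorem s_ne_zero {n : ℤ} (hn : 2 ≤ |n|) (hn' : n ≠ -2) (k : ℕ) : s n k ≠ 0 := by
  have one_le : |s n 0| ≤ |s n k| := (strictMono_abs_s hn hn').monotone k.zero_le
  intro h
  simp [h, s] at one_le

theorem not_s_dvd_s_of_lt {n : ℤ} (hn : 2 ≤ |n|) (hn' : n ≠ -2) {k m : ℕ} (hkm : k < m) :
    ¬ s n m ∣ s n k := by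
  intro hdvd
  have abs_lt : |s n k| < |s n m| := strictMono_abs_s hn hn' hkm
  exact s_ne_zero hn hn' k (Int.eq_zero_of_dvd_of_natAbs_lt_natAbs hdvd (by zify; exact abs_lt))

theorem s_dvd_s_iff_eq_of_le {n : ℤ} (hn : 2 ≤ |n|) (hn' : n ≠ -2) {k m : ℕ} (hk : k ≤ 2 * m) :
    s n m ∣ s n k ↔ k = m := by
  refine ⟨fun hdvd ↦ ?_, fun h ↦ h ▸ dvd_rfl⟩
  rcases lt_trichotomy k m with hlt | heq | hgt
  · exact absurd hdvd (not_s_dvd_s_of_lt hn hn' hlt)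
  · exact heq
  · obtain ⟨i, j, rfl, rfl⟩ : ∃ i j, m = j + i ∧ k = j + 2 * i :=
      ⟨k - m, 2 * m - k, by lia, by lia⟩
    have hreflect : s n (j + i) ∣ s n (j + 2 * i) + s n j := ⟨T n i, (s_mul_T_eq_add n i j).symm⟩
    exact absurd ((dvd_add_right hdvd).mp hreflect) (not_s_dvd_s_of_lt hn hn' (by lia))

/-- For `n ≤ -3` this is a statement about the sequence `r`, since `s_k(n) = (-1)^k r_k(-n)`. -/
theorem s_periodicity_mod_term_general (n : ℤ) (hn : 2 ≤ |n|) (hn' : n ≠ -2) (m k : ℕ) :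
    (s n m ∣ s n (k + (2 * m + 1)) - s n k) ∧
    (s n m ∣ s n k ↔ k ≡ m [MOD 2 * m + 1]) := by
  refine ⟨s_dvd_s_add_sub_s n m k, ?_⟩
  have hmod : k % (2 * m + 1) ≤ 2 * m := Nat.le_of_lt_succ (Nat.mod_lt k (by lia))
  calc s n m ∣ s n k
      ↔ s n m ∣ s n (k % (2 * m + 1)) := (s_dvd_s_mod_iff n m k).symm
    _ ↔ k % (2 * m + 1) = m := s_dvd_s_iff_eq_of_le hn hn' hmod
    _ ↔ k ≡ m [MOD 2 * m + 1] := by rw [Nat.ModEq, Nat.mod_eq_of_lt (by lia : m < 2 * m + 1)]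

theorem s_periodicity_mod_term (n : ℤ) (hn : 2 ≤ n) (m : ℕ) (hm : 1 ≤ m) (k : ℕ) :
    (s n m ∣ s n (k + (2 * m + 1)) - s n k) ∧
    (s n m ∣ s n k ↔ k ≡ m [MOD 2 * m + 1]) :=
  s_periodicity_mod_term_general n (hn.trans (le_abs_self n)) (by lia) m k
end
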